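/- Let 𝒳 ⊆ L⁰₊ and for each n ∈ ℕ define Oₙ^𝒳 := sc{(X − n)₊ : X ∈ 𝒳}. If ⋂ₙ Oₙ^𝒳 = {0}, i.e. the only Y ∈ L⁰₊ belonging to Oₙ^𝒳 for every n ∈ ℕ is Y = 0 a.e., then there exists a probability measure Q on (Ω, F) with Q ~ P such that 𝒳 is uniformly Q-integrable. -/

import Mathlib

open MeasureTheory Filter Topology

/-- `L⁰₊`: (representatives of) measurable functions that are nonnegative `P`-a.s. -/
def L0pos {Ω : Type*} [MeasurableSpace Ω] (P : Measure Ω) : Set (Ω → ℝ) :=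
  {X | Measurable X ∧ ∀ᵐ ω ∂P, 0 ≤ X ω}

/-- `sc S`: the solid hull of the convex hull of `S`. -/
def scSet {Ω : Type*} [MeasurableSpace Ω] (P : Measure Ω) (S : Set (Ω → ℝ)) :
    Set (Ω → ℝ) :=
  {Y | Y ∈ L0pos P ∧ ∃ Z ∈ convexHull ℝ S, ∀ᵐ ω ∂P, Y ω ≤ Z ω}

/-- `Oₙ^𝒳 = sc {(X - n)₊ : X ∈ 𝒳}`. -/
def Oset {Ω : Type*} [MeasurableSpace Ω] (P : Measure Ω) (𝒳 : Set (Ω → ℝ)) (n : ℕ) :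
    Set (Ω → ℝ) :=
  scSet P {f | ∃ X ∈ 𝒳, f = fun ω => max (X ω - n) 0}

/-- `𝒳` is uniformly `Q`-integrable:  `sup_{X ∈ 𝒳} E_Q[X 1_{X > n}] → 0`. -/
def UnifInt {Ω : Type*} [MeasurableSpace Ω] (Q : Measure Ω) (𝒳 : Set (Ω → ℝ)) : Prop :=
  Tendsto (fun n : ℕ => ⨆ X ∈ 𝒳, ∫⁻ ω in {ω | (n : ℝ) < X ω}, ENNReal.ofReal (X ω) ∂Q)
    atTop (𝓝 0)

/-!
Consider the convex functional `J f = ∫ exp (-f) dP` on the decreasing convex sets `Oₙ`. The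
identity `∫ (exp (-f / 2) - exp (-g / 2))² = J f + J g - 2 J ((f + g) / 2)` makes almost minimizers
converge almost everywhere; as no nonzero function lies in all `Oₙ`, the limit of `exp (-f)` is `1`,
so `J` is nearly maximal on all of `Oₙ` for large `n`. On one convex set, the first-order optimality
condition at an almost minimizer bounds `∫ v g` uniformly in `g`, where `v` is the limit of
`exp (-f)` and is close to `1` off a small set; applied to large multiples of `Oₙ`, it makes
`∫ (X - n)₊` uniformly small off a small set. Intersecting such sets gives a countable cover by sets
`A j` with `𝒳` uniformly `P|A j`-integrable, and a sum of these restrictions with small enough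
weights, normalized, is the required measure.
-/

section ExpNeg

variable {Ω : Type*} [MeasurableSpace Ω] {P : Measure Ω}

theorem ae_norm_exp_neg_le_one {f : Ω → ℝ} (hf : 0 ≤ᵐ[P] f) :
    ∀ᵐ ω ∂P, ‖Real.exp (-f ω)‖ ≤ 1 := by
  filter_upwards [hf] with ω hω
  rw [Real.norm_eq_abs, Real.abs_exp, Real.exp_le_one_iff]
  exact neg_nonpos.2 hω

theorem integrable_exp_neg [IsFiniteMeasure P] {f : Ω → ℝ} (hf : f ∈ L0pos P) :
    Integrable (fun ω => Real.exp (-f ω)) P :=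
  .of_bound hf.1.neg.exp.aestronglyMeasurable 1 (ae_norm_exp_neg_le_one hf.2)

theorem integral_exp_neg_le [IsFiniteMeasure P] {f : Ω → ℝ} (hf : 0 ≤ᵐ[P] f) :
    ∫ ω, Real.exp (-f ω) ∂P ≤ P.real Set.univ := by
  simpa using (Real.le_norm_self _).trans
    (norm_integral_le_of_norm_le_const (ae_norm_exp_neg_le_one hf))

theorem tendsto_integral_exp_neg [IsFiniteMeasure P] {f : ℕ → Ω → ℝ} {v : Ω → ℝ}
    (hf : ∀ k, f k ∈ L0pos P)
    (hlim : ∀ᵐ ω ∂P, Tendsto (fun k => Real.exp (-f k ω)) atTop (𝓝 (v ω))) :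
    Tendsto (fun k => ∫ ω, Real.exp (-f k ω) ∂P) atTop (𝓝 (∫ ω, v ω ∂P)) :=
  tendsto_integral_of_dominated_convergence (fun _ => 1)
    (fun k => (hf k).1.neg.exp.aestronglyMeasurable) (integrable_const 1)
    (fun k => ae_norm_exp_neg_le_one (hf k).2) hlim

theorem convex_L0pos : Convex ℝ (L0pos P) := by
  intro f hf g hg a b ha hb _
  refine ⟨(hf.1.const_smul a).add (hg.1.const_smul b), ?_⟩
  filter_upwards [hf.2, hg.2] with ω hfω hgω
  exact add_nonneg (mul_nonneg ha hfω) (mul_nonneg hb hgω)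

theorem smul_mem_L0pos {f : Ω → ℝ} (hf : f ∈ L0pos P) {c : ℝ} (hc : 0 ≤ c) : c • f ∈ L0pos P :=
  ⟨hf.1.const_smul c, hf.2.mono fun _ hω => mul_nonneg hc hω⟩

theorem integral_sq_exp_neg_half_sub [IsFiniteMeasure P] {f g : Ω → ℝ}
    (hf : f ∈ L0pos P) (hg : g ∈ L0pos P) :
    ∫ ω, (Real.exp (-(f ω / 2)) - Real.exp (-(g ω / 2))) ^ 2 ∂P =
      ∫ ω, Real.exp (-f ω) ∂P + ∫ ω, Real.exp (-g ω) ∂P -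
        2 * ∫ ω, Real.exp (-midpoint ℝ f g ω) ∂P := by
  have hmid : midpoint ℝ f g ∈ L0pos P := convex_L0pos.midpoint_mem hf hg
  have hsum : Integrable (fun ω => Real.exp (-f ω) + Real.exp (-g ω)) P :=
    (integrable_exp_neg hf).add (integrable_exp_neg hg)
  rw [← integral_add (integrable_exp_neg hf) (integrable_exp_neg hg), ← integral_const_mul,
    ← integral_sub hsum ((integrable_exp_neg hmid).const_mul 2)]
  refine integral_congr_ae (ae_of_all _ fun ω => ?_)
  have hmidω : midpoint ℝ f g ω = f ω / 2 + g ω / 2 := by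
    simp only [midpoint_eq_smul_add, Pi.smul_apply, Pi.add_apply, invOf_eq_inv, smul_eq_mul]
    ring
  have hsq (x : ℝ) : Real.exp (-x) = Real.exp (-(x / 2)) ^ 2 := by
    rw [← Real.exp_nat_mul]
    congr 1
    push_cast
    ring
  simp only [hmidω, neg_add, Real.exp_add, hsq (f ω), hsq (g ω)]
  ring

end ExpNeg

section AlmostMinimizing

theorem exists_almost_minimizing_seq {α : Type*} {J : α → ℝ} {C : ℕ → Set α} (hC : Antitone C)
    (hne : ∀ n, (C n).Nonempty) (hbelow : BddBelow (J '' C 0)) (habove : BddAbove (J '' C 0))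
    {ε : ℕ → ℝ} (hε : ∀ k, 0 < ε k) :
    ∃ (φ : ℕ → ℕ) (x : ℕ → α) (L : ℝ), StrictMono φ ∧ (∀ k, x k ∈ C (φ k)) ∧
      (∀ k, J (x k) ≤ L + ε k) ∧ ∀ k, ∀ y ∈ C (φ k), L - ε k ≤ J y := by
  have himage (n : ℕ) : J '' C n ⊆ J '' C 0 := Set.image_mono (hC n.zero_le)
  have hinf_le {n : ℕ} {y : α} (hy : y ∈ C n) : sInf (J '' C n) ≤ J y :=
    csInf_le (hbelow.mono (himage n)) ⟨y, hy, rfl⟩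
  have hmono : Monotone fun n => sInf (J '' C n) := fun m n hmn =>
    csInf_le_csInf (hbelow.mono (himage m)) ((hne n).image J) (Set.image_mono (hC hmn))
  have hbdd : BddAbove (Set.range fun n => sInf (J '' C n)) := by
    obtain ⟨b, hb⟩ := habove
    refine ⟨b, ?_⟩
    rintro _ ⟨n, rfl⟩
    obtain ⟨y, hy⟩ := hne n
    exact (hinf_le hy).trans (hb (himage n ⟨y, hy, rfl⟩))
  set L := ⨆ n, sInf (J '' C n)
  obtain ⟨φ, hφ, hφL⟩ := extraction_forall_of_eventually fun k =>
    (tendsto_atTop_ciSup hmono hbdd).eventually_const_lt (sub_lt_self L (hε k))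
  have hnear (k : ℕ) : ∃ x ∈ C (φ k), J x ≤ L + ε k := by
    obtain ⟨_, ⟨x, hx, rfl⟩, hJx⟩ := exists_lt_of_csInf_lt ((hne (φ k)).image J)
      (lt_add_of_le_of_pos (le_ciSup hbdd (φ k)) (hε k))
    exact ⟨x, hx, hJx.le⟩
  choose x hx hJx using hnear
  exact ⟨φ, x, L, hφ, hx, hJx, fun k y hy => (hφL k).le.trans (hinf_le hy)⟩

variable {Ω : Type*} [MeasurableSpace Ω] {P : Measure Ω}

theorem eLpNorm_two_le_of_integral_sq_le {u : Ω → ℝ} (hu : MemLp u 2 P) {r : ℝ} (hr : 0 ≤ r)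
    (h : ∫ ω, u ω ^ 2 ∂P ≤ r ^ 2) : eLpNorm u 2 P ≤ ENNReal.ofReal r := by
  rw [hu.eLpNorm_eq_integral_rpow_norm two_ne_zero ENNReal.ofNat_ne_top]
  refine ENNReal.ofReal_le_ofReal ?_
  simp only [ENNReal.toReal_ofNat, Real.rpow_two, Real.norm_eq_abs, sq_abs]
  rw [← one_div, ← Real.sqrt_eq_rpow]
  exact Real.sqrt_le_iff.2 ⟨hr, h⟩

theorem exists_measurable_ae_tendsto_exp_neg [IsFiniteMeasure P] {f : ℕ → Ω → ℝ}
    (hf : ∀ k, f k ∈ L0pos P) {L : ℝ}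
    (hupper : ∀ k, ∫ ω, Real.exp (-f k ω) ∂P ≤ L + (1 / 4) ^ k)
    (hlower : ∀ N n m, N ≤ n → N ≤ m →
      L - (1 / 4) ^ N ≤ ∫ ω, Real.exp (-midpoint ℝ (f n) (f m) ω) ∂P) :
    ∃ v : Ω → ℝ, Measurable v ∧
      ∀ᵐ ω ∂P, Tendsto (fun k => Real.exp (-f k ω)) atTop (𝓝 (v ω)) := by
  set u : ℕ → Ω → ℝ := fun k ω => Real.exp (-(f k ω / 2))
  have hhalf (k : ℕ) : (fun ω => f k ω / 2) ∈ L0pos P :=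
    ⟨(hf k).1.div_const 2, (hf k).2.mono fun _ hω => div_nonneg hω zero_le_two⟩
  have hu (k : ℕ) : MemLp (u k) 2 P :=
    .of_bound (hhalf k).1.neg.exp.aestronglyMeasurable 1 (ae_norm_exp_neg_le_one (hhalf k).2)
  have hcauchy (N n m : ℕ) (hn : N ≤ n) (hm : N ≤ m) :
      eLpNorm (u n - u m) 2 P < ENNReal.ofReal (3 * (1 / 2) ^ N) := by
    have hpow {k : ℕ} (hk : N ≤ k) : (1 / 4 : ℝ) ^ k ≤ (1 / 4) ^ N :=
      pow_le_pow_of_le_one (by norm_num) (by norm_num) hk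
    have hsq : ∫ ω, (u n - u m) ω ^ 2 ∂P ≤ (2 * (1 / 2) ^ N) ^ 2 := calc
      ∫ ω, (u n - u m) ω ^ 2 ∂P = _ := integral_sq_exp_neg_half_sub (hf n) (hf m)
      _ ≤ 4 * (1 / 4) ^ N := by
        linarith [hupper n, hupper m, hlower N n m hn hm, hpow hn, hpow hm]
      _ = (2 * (1 / 2) ^ N) ^ 2 := by
        rw [mul_pow, ← pow_mul, mul_comm N, pow_mul]
        norm_num
    refine (eLpNorm_two_le_of_integral_sq_le ((hu n).sub (hu m)) (by positivity) hsq).trans_lt ?_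
    rw [ENNReal.ofReal_lt_ofReal_iff (by positivity)]
    gcongr
    norm_num
  have hsummable : ∑' N : ℕ, ENNReal.ofReal (3 * (1 / 2) ^ N) ≠ ⊤ :=
    (summable_geometric_two.mul_left 3).tsum_ofReal_ne_top
  obtain ⟨w, hw, hwlim⟩ := measurable_limit_of_tendsto_metrizable_ae
    (fun k => (hu k).1.aemeasurable)
    (Lp.ae_tendsto_of_cauchy_eLpNorm (fun k => (hu k).1) one_le_two hsummable hcauchy)
  refine ⟨fun ω => w ω ^ 2, hw.pow_const 2, hwlim.mono fun ω hω => (hω.pow 2).congr fun k => ?_⟩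
  rw [← Real.exp_nat_mul]
  congr 1
  push_cast
  ring

theorem exists_almost_minimizing_seq_ae_tendsto_exp_neg [IsFiniteMeasure P] {C : ℕ → Set (Ω → ℝ)}
    (hanti : Antitone C) (hne : ∀ n, (C n).Nonempty) (hconv : ∀ n, Convex ℝ (C n))
    (hpos : ∀ n, C n ⊆ L0pos P) :
    ∃ (f : ℕ → Ω → ℝ) (v : Ω → ℝ), (∀ k, f k ∈ C k) ∧
      (∀ k, ∃ n, ∀ g ∈ C n,
        ∫ ω, Real.exp (-f k ω) ∂P ≤ ∫ ω, Real.exp (-g ω) ∂P + 2 * (1 / 4) ^ k) ∧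
      Measurable v ∧ ∀ᵐ ω ∂P, Tendsto (fun k => Real.exp (-f k ω)) atTop (𝓝 (v ω)) := by
  have hbelow : BddBelow ((fun g : Ω → ℝ => ∫ ω, Real.exp (-g ω) ∂P) '' C 0) :=
    ⟨0, Set.forall_mem_image.2 fun _ _ => integral_nonneg fun _ => (Real.exp_pos _).le⟩
  have habove : BddAbove ((fun g : Ω → ℝ => ∫ ω, Real.exp (-g ω) ∂P) '' C 0) :=
    ⟨P.real Set.univ, Set.forall_mem_image.2 fun _ hg => integral_exp_neg_le (hpos 0 hg).2⟩
  obtain ⟨φ, f, L, hφ, hf, hupper, hlower⟩ := exists_almost_minimizing_seq hanti hne hbelow habove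
    fun k => pow_pos (by norm_num : (0 : ℝ) < 1 / 4) k
  obtain ⟨v, hv, hlim⟩ := exists_measurable_ae_tendsto_exp_neg (fun k => hpos _ (hf k)) hupper
    fun N n m hn hm => hlower N _ ((hconv (φ N)).midpoint_mem
      (hanti (hφ.monotone hn) (hf n)) (hanti (hφ.monotone hm) (hf m)))
  refine ⟨f, v, fun k => hanti hφ.le_apply (hf k), fun k => ⟨φ k, fun g hg => ?_⟩, hv, hlim⟩
  linarith [hupper k, hlower k g hg]

end AlmostMinimizing

section FirstVariation

theorem exp_neg_convexCombo_mul_le {x y t : ℝ} (hx : 0 ≤ x) (hy : 0 ≤ y) (ht : 0 < t)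
    (ht' : t ≤ 1 / 2) :
    Real.exp (-((1 - t) * y + t * x)) * x ≤
      1 + (Real.exp (-y) - Real.exp (-((1 - t) * y + t * x))) / t := by
  set e := Real.exp (-((1 - t) * y + t * x)) with he
  have htangent : e * (t * (x - y) + 1) ≤ Real.exp (-y) := calc
    e * (t * (x - y) + 1) ≤ e * Real.exp (t * (x - y)) :=
      mul_le_mul_of_nonneg_left (Real.add_one_le_exp _) (Real.exp_pos _).le
    _ = Real.exp (-y) := by
      rw [he, ← Real.exp_add]
      ring_nf
  have he_le : e ≤ Real.exp (-((1 - t) * y)) :=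
    Real.exp_le_exp.2 (neg_le_neg (le_add_of_nonneg_right (mul_nonneg ht.le hx)))
  have hey : e * y ≤ 1 := by
    have hmax := (Real.mul_exp_neg_le_exp_neg_one ((1 - t) * y)).trans Real.exp_neg_one_lt_half.le
    have hnonneg := mul_nonneg (Real.exp_pos (-((1 - t) * y))).le hy
    nlinarith [mul_le_mul_of_nonneg_right he_le hy]
  rw [← sub_le_iff_le_add', le_div_iff₀ ht]
  nlinarith

theorem tendsto_exp_neg_convexCombo {ι : Type*} {l : Filter ι} {y t : ι → ℝ} {a : ℝ} (x : ℝ)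
    (hy : Tendsto (fun k => Real.exp (-y k)) l (𝓝 a)) (ht : Tendsto t l (𝓝 0)) :
    Tendsto (fun k => Real.exp (-((1 - t k) * y k + t k * x))) l (𝓝 a) := by
  have hy' : Tendsto (fun k => Real.exp (-y k) ^ (1 - t k)) l (𝓝 (a ^ (1 - 0 : ℝ))) :=
    hy.rpow (ht.const_sub 1) (Or.inr (by norm_num))
  have hx : Tendsto (fun k => Real.exp (-(t k * x))) l (𝓝 (Real.exp (-(0 * x)))) :=
    (Real.continuous_exp.tendsto _).comp (ht.mul_const x).neg
  convert hy'.mul hx using 2 with k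
  · rw [← Real.exp_mul, ← Real.exp_add]
    ring_nf
  · simp

variable {Ω : Type*} [MeasurableSpace Ω] {P : Measure Ω} [IsFiniteMeasure P]

theorem lintegral_exp_neg_convexCombo_mul_le {f g : Ω → ℝ} (hf : f ∈ L0pos P) (hg : g ∈ L0pos P)
    {t ε : ℝ} (ht : 0 < t) (ht' : t ≤ 1 / 2)
    (hmin : ∫ ω, Real.exp (-f ω) ∂P ≤ ∫ ω, Real.exp (-((1 - t) * f ω + t * g ω)) ∂P + ε) :
    ∫⁻ ω, ENNReal.ofReal (Real.exp (-((1 - t) * f ω + t * g ω)) * g ω) ∂P ≤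
      ENNReal.ofReal (P.real Set.univ + ε / t) := by
  set z : Ω → ℝ := fun ω => (1 - t) * f ω + t * g ω
  have hz : z ∈ L0pos P := convex_L0pos hf hg (by linarith) ht.le (by ring)
  have hdiff : Integrable (fun ω => (Real.exp (-f ω) - Real.exp (-z ω)) / t) P :=
    ((integrable_exp_neg hf).sub (integrable_exp_neg hz)).div_const t
  have hint : Integrable (fun ω => 1 + (Real.exp (-f ω) - Real.exp (-z ω)) / t) P :=
    (integrable_const 1).add hdiff
  have hle : ∀ᵐ ω ∂P,
      Real.exp (-z ω) * g ω ≤ 1 + (Real.exp (-f ω) - Real.exp (-z ω)) / t := by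
    filter_upwards [hf.2, hg.2] with ω hfω hgω using exp_neg_convexCombo_mul_le hgω hfω ht ht'
  have hnonneg : ∀ᵐ ω ∂P, 0 ≤ 1 + (Real.exp (-f ω) - Real.exp (-z ω)) / t := by
    filter_upwards [hle, hg.2] with ω hω hgω
    exact (mul_nonneg (Real.exp_pos _).le hgω).trans hω
  calc ∫⁻ ω, ENNReal.ofReal (Real.exp (-z ω) * g ω) ∂P
      ≤ ∫⁻ ω, ENNReal.ofReal (1 + (Real.exp (-f ω) - Real.exp (-z ω)) / t) ∂P :=
        lintegral_mono_ae (hle.mono fun ω => ENNReal.ofReal_le_ofReal)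
    _ = ENNReal.ofReal (P.real Set.univ +
          (∫ ω, Real.exp (-f ω) ∂P - ∫ ω, Real.exp (-z ω) ∂P) / t) := by
        rw [← ofReal_integral_eq_lintegral_ofReal hint hnonneg,
          integral_add (integrable_const 1) hdiff, integral_div,
          integral_sub (integrable_exp_neg hf) (integrable_exp_neg hz), integral_const,
          smul_eq_mul, mul_one]
    _ ≤ ENNReal.ofReal (P.real Set.univ + ε / t) := by
        gcongr
        exact sub_le_iff_le_add'.2 hmin

theorem lintegral_mul_le_of_almost_minimizing {C : Set (Ω → ℝ)} (hconv : Convex ℝ C)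
    (hpos : C ⊆ L0pos P) {f : ℕ → Ω → ℝ} (hf : ∀ k, f k ∈ C)
    (hmin : ∀ k, ∀ g ∈ C,
      ∫ ω, Real.exp (-f k ω) ∂P ≤ ∫ ω, Real.exp (-g ω) ∂P + 2 * (1 / 4) ^ k)
    {v : Ω → ℝ} (hlim : ∀ᵐ ω ∂P, Tendsto (fun k => Real.exp (-f k ω)) atTop (𝓝 (v ω)))
    {g : Ω → ℝ} (hg : g ∈ C) :
    ∫⁻ ω, ENNReal.ofReal (v ω * g ω) ∂P ≤ P Set.univ := by
  -- The step `t k` tends to `0`, but slowly enough that the defect `2 * (1 / 4) ^ k` is `o(t k)`.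
  set t : ℕ → ℝ := fun k => (1 / 2) ^ (k + 1) with ht
  have ht_pos (k : ℕ) : 0 < t k := by positivity
  have ht_le (k : ℕ) : t k ≤ 1 / 2 := pow_le_of_le_one (by norm_num) (by norm_num) k.succ_ne_zero
  have ht_lim : Tendsto t atTop (𝓝 0) :=
    (tendsto_pow_atTop_nhds_zero_of_lt_one (by norm_num) (by norm_num)).comp
      (tendsto_add_atTop_nat 1)
  have hdefect (k : ℕ) : 2 * (1 / 4) ^ k / t k = 8 * t k := by
    rw [div_eq_iff (ht_pos k).ne', ht, show (1 / 4 : ℝ) = 1 / 2 * (1 / 2) by norm_num, mul_pow]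
    ring
  set e : ℕ → Ω → ℝ := fun k ω => Real.exp (-((1 - t k) * f k ω + t k * g ω))
  have he_meas (k : ℕ) : Measurable fun ω => ENNReal.ofReal (e k ω * g ω) :=
    ((((hpos (hf k)).1.const_mul _).add ((hpos hg).1.const_mul _)).neg.exp.mul
      (hpos hg).1).ennreal_ofReal
  have he_lim : ∀ᵐ ω ∂P,
      Tendsto (fun k => ENNReal.ofReal (e k ω * g ω)) atTop (𝓝 (ENNReal.ofReal (v ω * g ω))) :=
    hlim.mono fun ω hω => ENNReal.tendsto_ofReal
      ((tendsto_exp_neg_convexCombo (g ω) hω ht_lim).mul_const (g ω))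
  have he_le (k : ℕ) : ∫⁻ ω, ENNReal.ofReal (e k ω * g ω) ∂P ≤
      ENNReal.ofReal (P.real Set.univ + 8 * t k) := by
    rw [← hdefect k]
    exact lintegral_exp_neg_convexCombo_mul_le (hpos (hf k)) (hpos hg) (ht_pos k) (ht_le k)
      (hmin k _ (hconv (hf k) hg (by linarith [ht_le k]) (ht_pos k).le (sub_add_cancel 1 (t k))))
  have hbound_lim : Tendsto (fun k => ENNReal.ofReal (P.real Set.univ + 8 * t k)) atTop
      (𝓝 (P Set.univ)) := by
    simpa using ENNReal.tendsto_ofReal ((ht_lim.const_mul 8).const_add (P.real Set.univ))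
  calc ∫⁻ ω, ENNReal.ofReal (v ω * g ω) ∂P
      = ∫⁻ ω, liminf (fun k => ENNReal.ofReal (e k ω * g ω)) atTop ∂P :=
        lintegral_congr_ae (he_lim.mono fun ω hω => hω.liminf_eq.symm)
    _ ≤ liminf (fun k => ∫⁻ ω, ENNReal.ofReal (e k ω * g ω) ∂P) atTop := lintegral_liminf_le he_meas
    _ ≤ liminf (fun k => ENNReal.ofReal (P.real Set.univ + 8 * t k)) atTop :=
        liminf_le_liminf (Eventually.of_forall he_le)
    _ = P Set.univ := hbound_lim.liminf_eq

end FirstVariation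

section BoundedOffSmallSet

variable {Ω : Type*} [MeasurableSpace Ω] {P : Measure Ω} [IsFiniteMeasure P]

theorem exists_density_lintegral_mul_le {C : Set (Ω → ℝ)} (hconv : Convex ℝ C)
    (hne : C.Nonempty) (hpos : C ⊆ L0pos P) {δ : ℝ}
    (hδ : ∀ g ∈ C, P.real Set.univ - δ ≤ ∫ ω, Real.exp (-g ω) ∂P) :
    ∃ v : Ω → ℝ, Measurable v ∧ (∀ᵐ ω ∂P, v ω ∈ Set.Icc 0 1) ∧ ∫ ω, (1 - v ω) ∂P ≤ δ ∧
      ∀ g ∈ C, ∫⁻ ω, ENNReal.ofReal (v ω * g ω) ∂P ≤ P Set.univ := by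
  obtain ⟨f, v, hf, hmin, hv, hlim⟩ := exists_almost_minimizing_seq_ae_tendsto_exp_neg
    (P := P) (C := fun _ => C) antitone_const (fun _ => hne) (fun _ => hconv) (fun _ => hpos)
  have hv_mem : ∀ᵐ ω ∂P, v ω ∈ Set.Icc 0 1 := by
    filter_upwards [hlim, ae_all_iff.2 fun k => (hpos (hf k)).2] with ω hω hfω
    exact isClosed_Icc.mem_of_tendsto hω (Eventually.of_forall fun k =>
      ⟨(Real.exp_pos _).le, Real.exp_le_one_iff.2 (neg_nonpos.2 (hfω k))⟩)
  have hv_int : Integrable v P :=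
    .of_mem_Icc 0 1 hv.aemeasurable hv_mem
  refine ⟨v, hv, hv_mem, ?_, fun g hg => lintegral_mul_le_of_almost_minimizing hconv hpos hf
    (fun k g hg => (hmin k).elim fun _ h => h g hg) hlim hg⟩
  have hlower : P.real Set.univ - δ ≤ ∫ ω, v ω ∂P :=
    ge_of_tendsto' (tendsto_integral_exp_neg (fun k => hpos (hf k)) hlim) fun k => hδ _ (hf k)
  rw [integral_sub (integrable_const 1) hv_int, integral_const, smul_eq_mul, mul_one]
  exact sub_le_comm.1 hlower

theorem measure_compl_half_le_of_integral_one_sub_le {v : Ω → ℝ} (hv : Measurable v)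
    (hv_mem : ∀ᵐ ω ∂P, v ω ∈ Set.Icc 0 1) {δ : ℝ} (hδ : ∫ ω, (1 - v ω) ∂P ≤ δ) :
    P {ω | 1 / 2 ≤ v ω}ᶜ ≤ ENNReal.ofReal (2 * δ) := by
  have hmarkov := mul_meas_ge_le_integral_of_nonneg
    (hv_mem.mono fun ω hω => sub_nonneg.2 hω.2)
    ((integrable_const 1).sub (.of_mem_Icc 0 1 hv.aemeasurable hv_mem)) (1 / 2)
  calc P {ω | 1 / 2 ≤ v ω}ᶜ ≤ P {ω | 1 / 2 ≤ 1 - v ω} := measure_mono fun ω hω => by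
        have hvω : v ω < 1 / 2 := not_le.1 hω
        change 1 / 2 ≤ 1 - v ω
        linarith
    _ = ENNReal.ofReal (P.real {ω | 1 / 2 ≤ 1 - v ω}) := by rw [ofReal_measureReal]
    _ ≤ ENNReal.ofReal (2 * δ) := ENNReal.ofReal_le_ofReal (by linarith)

theorem exists_measurableSet_setLIntegral_le {C : Set (Ω → ℝ)} (hconv : Convex ℝ C)
    (hpos : C ⊆ L0pos P) {δ : ℝ}
    (hδ : ∀ g ∈ C, P.real Set.univ - δ ≤ ∫ ω, Real.exp (-g ω) ∂P) :
    ∃ B, MeasurableSet B ∧ P Bᶜ ≤ ENNReal.ofReal (2 * δ) ∧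
      ∀ g ∈ C, ∫⁻ ω in B, ENNReal.ofReal (g ω) ∂P ≤ 2 * P Set.univ := by
  rcases C.eq_empty_or_nonempty with rfl | hne
  · exact ⟨Set.univ, .univ, by simp, by simp⟩
  obtain ⟨v, hv, hv_mem, hv_int, hvC⟩ := exists_density_lintegral_mul_le hconv hne hpos hδ
  have hB : MeasurableSet {ω | 1 / 2 ≤ v ω} := measurableSet_le measurable_const hv
  refine ⟨_, hB, measure_compl_half_le_of_integral_one_sub_le hv hv_mem hv_int, fun g hg => ?_⟩
  calc ∫⁻ ω in {ω | 1 / 2 ≤ v ω}, ENNReal.ofReal (g ω) ∂P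
      ≤ ∫⁻ ω in {ω | 1 / 2 ≤ v ω}, 2 * ENNReal.ofReal (v ω * g ω) ∂P := by
        refine setLIntegral_mono_ae' hB ?_
        filter_upwards [(hpos hg).2] with ω hgω hωB
        have hvω : 1 ≤ 2 * v ω := by linarith [show 1 / 2 ≤ v ω from hωB]
        rw [← ENNReal.ofReal_ofNat, ← ENNReal.ofReal_mul zero_le_two, ← mul_assoc]
        exact ENNReal.ofReal_le_ofReal (le_mul_of_one_le_left hgω hvω)
    _ ≤ ∫⁻ ω, 2 * ENNReal.ofReal (v ω * g ω) ∂P := setLIntegral_le_lintegral _ _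
    _ = 2 * ∫⁻ ω, ENNReal.ofReal (v ω * g ω) ∂P :=
        lintegral_const_mul _ (hv.mul (hpos hg).1).ennreal_ofReal
    _ ≤ 2 * P Set.univ := by gcongr; exact hvC g hg

theorem exists_forall_sub_le_integral_exp_neg {C : ℕ → Set (Ω → ℝ)} (hanti : Antitone C)
    (hconv : ∀ n, Convex ℝ (C n)) (hpos : ∀ n, C n ⊆ L0pos P)
    (hfreq : ∀ f : ℕ → Ω → ℝ, (∀ k, f k ∈ C k) →
      ∀ᵐ ω ∂P, ∀ ε > 0, ∃ᶠ k in atTop, f k ω < ε)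
    {δ : ℝ} (hδ : 0 < δ) :
    ∃ n, ∀ g ∈ C n, P.real Set.univ - δ ≤ ∫ ω, Real.exp (-g ω) ∂P := by
  by_cases hne : ∀ n, (C n).Nonempty
  swap
  · push Not at hne
    obtain ⟨n, hn⟩ := hne
    exact ⟨n, by simp [hn]⟩
  obtain ⟨f, v, hf, hmin, -, hlim⟩ :=
    exists_almost_minimizing_seq_ae_tendsto_exp_neg hanti hne hconv hpos
  have hlim_one : ∀ᵐ ω ∂P, Tendsto (fun k => Real.exp (-f k ω)) atTop (𝓝 1) := by
    filter_upwards [hlim, hfreq f hf, ae_all_iff.2 fun k => (hpos k (hf k)).2] with ω hω hωfreq hfω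
    suffices v ω = 1 from this ▸ hω
    refine le_antisymm (le_of_tendsto' hω fun k => Real.exp_le_one_iff.2 (neg_nonpos.2 (hfω k)))
      (le_of_forall_sub_le fun ε hε => ?_)
    refine isClosed_Ici.mem_of_frequently_of_tendsto ((hωfreq ε hε).mono fun k hk => ?_) hω
    change 1 - ε ≤ Real.exp (-f k ω)
    linarith [Real.one_sub_le_exp_neg (f k ω)]
  have hint : Tendsto (fun k => ∫ ω, Real.exp (-f k ω) ∂P - 2 * (1 / 4) ^ k) atTop
      (𝓝 (P.real Set.univ)) := by
    simpa using (tendsto_integral_exp_neg (fun k => hpos k (hf k)) hlim_one).sub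
      ((tendsto_pow_atTop_nhds_zero_of_lt_one (r := (1 / 4 : ℝ)) (by norm_num)
        (by norm_num)).const_mul 2)
  obtain ⟨k, hk⟩ := (hint.eventually_const_lt (sub_lt_self _ hδ)).exists
  obtain ⟨n, hn⟩ := hmin k
  exact ⟨n, fun g hg => by linarith [hn g hg]⟩

open scoped Pointwise in
theorem exists_measurableSet_setLIntegral_le_of_antitone {C : ℕ → Set (Ω → ℝ)}
    (hanti : Antitone C) (hconv : ∀ n, Convex ℝ (C n)) (hpos : ∀ n, C n ⊆ L0pos P)
    (hfreq : ∀ f : ℕ → Ω → ℝ, (∀ k, f k ∈ C k) →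
      ∀ᵐ ω ∂P, ∀ ε > 0, ∃ᶠ k in atTop, f k ω < ε)
    {ε : ℝ} (hε : 0 < ε) :
    ∃ n B, MeasurableSet B ∧ P Bᶜ ≤ ENNReal.ofReal ε ∧
      ∀ f ∈ C n, ∫⁻ ω in B, ENNReal.ofReal (f ω) ∂P ≤ ENNReal.ofReal ε := by
  set c : ℝ := (2 * P.real Set.univ + 1) / ε
  have hc : 0 < c := by positivity
  have hconv' (n : ℕ) : Convex ℝ (c • C n) := (hconv n).smul c
  have hpos' (n : ℕ) : c • C n ⊆ L0pos P :=
    Set.smul_set_subset_iff.2 fun f hf => smul_mem_L0pos (hpos n hf) hc.le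
  have hfreq' (g : ℕ → Ω → ℝ) (hg : ∀ k, g k ∈ c • C k) :
      ∀ᵐ ω ∂P, ∀ η > 0, ∃ᶠ k in atTop, g k ω < η := by
    choose f hf hfg using hg
    filter_upwards [hfreq f hf] with ω hω η hη
    refine (hω (η / c) (div_pos hη hc)).mono fun k hk => ?_
    rw [← hfg k]
    exact (lt_div_iff₀' hc).1 hk
  obtain ⟨n, hn⟩ := exists_forall_sub_le_integral_exp_neg
    (fun _ _ hmn => Set.smul_set_mono (hanti hmn)) hconv' hpos' hfreq' (half_pos hε)
  obtain ⟨B, hB, hPB, hBC⟩ := exists_measurableSet_setLIntegral_le (hconv' n) (hpos' n) hn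
  refine ⟨n, B, hB, by rwa [mul_div_cancel₀ ε two_ne_zero] at hPB, fun f hf => ?_⟩
  have hscaled : ENNReal.ofReal c * ∫⁻ ω in B, ENNReal.ofReal (f ω) ∂P ≤ 2 * P Set.univ := by
    rw [← lintegral_const_mul _ (hpos n hf).1.ennreal_ofReal]
    simpa only [Pi.smul_apply, smul_eq_mul, ENNReal.ofReal_mul hc.le]
      using hBC _ (Set.smul_mem_smul_set hf)
  refine (ENNReal.mul_le_mul_iff_right (ENNReal.ofReal_pos.2 hc).ne' ENNReal.ofReal_ne_top).1
    (hscaled.trans ?_)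
  rw [← ENNReal.ofReal_mul hc.le, div_mul_cancel₀ _ hε.ne', ← ofReal_measureReal,
    ← ENNReal.ofReal_ofNat, ← ENNReal.ofReal_mul zero_le_two]
  exact ENNReal.ofReal_le_ofReal (le_add_of_nonneg_right zero_le_one)

end BoundedOffSmallSet

section SolidConvexHull

variable {Ω : Type*} [MeasurableSpace Ω] {P : Measure Ω} {𝒳 : Set (Ω → ℝ)}

theorem convex_scSet (S : Set (Ω → ℝ)) : Convex ℝ (scSet P S) := by
  rintro f ⟨hf, F, hF, hfF⟩ g ⟨hg, G, hG, hgG⟩ a b ha hb hab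
  refine ⟨convex_L0pos hf hg ha hb hab, a • F + b • G, convex_convexHull ℝ S hF hG ha hb hab, ?_⟩
  filter_upwards [hfF, hgG] with ω hfω hgω
  exact add_le_add (mul_le_mul_of_nonneg_left hfω ha) (mul_le_mul_of_nonneg_left hgω hb)

theorem scSet_subset_scSet {S T : Set (Ω → ℝ)} (h : S ⊆ lowerClosure (convexHull ℝ T)) :
    scSet P S ⊆ scSet P T := by
  have hconv : Convex ℝ (lowerClosure (convexHull ℝ T) : Set (Ω → ℝ)) := by
    rintro F ⟨F', hF', hFF'⟩ G ⟨G', hG', hGG'⟩ a b ha hb hab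
    exact ⟨_, convex_convexHull ℝ T hF' hG' ha hb hab,
      add_le_add (smul_le_smul_of_nonneg_left hFF' ha) (smul_le_smul_of_nonneg_left hGG' hb)⟩
  rintro f ⟨hf, F, hF, hfF⟩
  obtain ⟨G, hG, hFG⟩ := convexHull_min h hconv hF
  exact ⟨hf, G, hG, hfF.mono fun ω hω => hω.trans (hFG ω)⟩

theorem mem_scSet_of_ae_le {S : Set (Ω → ℝ)} {f g : Ω → ℝ} (hf : f ∈ L0pos P)
    (hg : g ∈ scSet P S) (hfg : f ≤ᵐ[P] g) : f ∈ scSet P S := by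
  obtain ⟨-, Z, hZ, hgZ⟩ := hg
  exact ⟨hf, Z, hZ, hfg.trans hgZ⟩

theorem antitone_Oset : Antitone (Oset P 𝒳) := by
  refine fun m n hmn => scSet_subset_scSet ?_
  rintro _ ⟨X, hX, rfl⟩
  refine ⟨_, subset_convexHull ℝ _ ⟨X, hX, rfl⟩, fun ω => ?_⟩
  exact max_le_max_right 0 (sub_le_sub_left (Nat.cast_le.2 hmn) _)

theorem posPart_sub_mem_Oset {X : Ω → ℝ} (hX : X ∈ 𝒳) (hXm : Measurable X) (n : ℕ) :
    (fun ω => max (X ω - n) 0) ∈ Oset P 𝒳 n :=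
  ⟨⟨(hXm.sub_const _).max measurable_const, ae_of_all _ fun _ => le_max_right _ _⟩, _,
    subset_convexHull ℝ _ ⟨X, hX, rfl⟩, ae_of_all _ fun _ => le_rfl⟩

theorem ae_frequently_lt_of_mem_Oset
    (hcap : ∀ Y : Ω → ℝ, (∀ n : ℕ, Y ∈ Oset P 𝒳 n) → ∀ᵐ ω ∂P, Y ω = 0)
    {f : ℕ → Ω → ℝ} (hf : ∀ k, f k ∈ Oset P 𝒳 k) :
    ∀ᵐ ω ∂P, ∀ ε > 0, ∃ᶠ k in atTop, f k ω < ε := by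
  set E : ℕ → Set Ω := fun j => {ω | ∀ k ≥ j, 1 / (j + 1 : ℝ) ≤ f k ω} with hE
  have hE_meas (j : ℕ) : MeasurableSet (E j) := by
    simp only [hE, Set.ofPred_forall]
    exact .iInter fun k => .iInter fun _ => measurableSet_le measurable_const (hf k).1.1
  have hE_null (j : ℕ) : ∀ᵐ ω ∂P, ω ∉ E j := by
    have hj : 0 < 1 / (j + 1 : ℝ) := Nat.one_div_pos_of_nat
    set Y : Ω → ℝ := (E j).indicator fun _ => 1 / (j + 1 : ℝ)
    have hY : Y ∈ L0pos P := ⟨measurable_const.indicator (hE_meas j),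
      ae_of_all _ (Set.indicator_nonneg fun _ _ => hj.le)⟩
    have hY_le {k : ℕ} (hk : j ≤ k) : Y ≤ᵐ[P] f k := by
      filter_upwards [(hf k).1.2] with ω hω
      exact Set.indicator_apply_le' (fun hωE => hωE k hk) fun _ => hω
    have hY_mem (n : ℕ) : Y ∈ Oset P 𝒳 n := antitone_Oset (le_max_right j n)
      (mem_scSet_of_ae_le hY (hf _) (hY_le (le_max_left j n)))
    filter_upwards [hcap Y hY_mem] with ω hω hωE
    exact hj.ne' ((Set.indicator_of_mem hωE _).symm.trans hω)
  filter_upwards [ae_all_iff.2 hE_null] with ω hω ε hε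
  by_contra hfreq
  obtain ⟨N, hN⟩ := eventually_atTop.1 (not_frequently.1 hfreq)
  obtain ⟨i, hi⟩ := exists_nat_one_div_lt hε
  refine hω (max N i) fun k hk => ?_
  calc 1 / ((max N i : ℕ) + 1 : ℝ) ≤ 1 / (i + 1 : ℝ) :=
        Nat.one_div_le_one_div (le_max_right N i)
    _ ≤ f k ω := hi.le.trans (not_lt.1 (hN k (le_of_max_le_left hk)))

end SolidConvexHull

section UniformIntegrability

variable {Ω : Type*} [MeasurableSpace Ω] {𝒳 : Set (Ω → ℝ)}

theorem unifInt_of_forall_exists_lintegral_sub_le {μ : Measure Ω} (h𝒳 : ∀ X ∈ 𝒳, Measurable X)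
    (h : ∀ ε > 0, ∃ n : ℕ, ∀ X ∈ 𝒳, ∫⁻ ω, ENNReal.ofReal (X ω - n) ∂μ ≤ ε) :
    UnifInt μ 𝒳 := by
  refine ENNReal.tendsto_atTop_zero.2 fun ε hε => ?_
  obtain ⟨n, hn⟩ := h (ε / 2) (ENNReal.half_pos hε.ne')
  refine ⟨2 * n, fun m hm => iSup₂_le fun X hX => ?_⟩
  have hm' : 2 * (n : ℝ) ≤ m := by exact_mod_cast hm
  calc ∫⁻ ω in {ω | (m : ℝ) < X ω}, ENNReal.ofReal (X ω) ∂μ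
      ≤ ∫⁻ ω in {ω | (m : ℝ) < X ω}, 2 * ENNReal.ofReal (X ω - n) ∂μ := by
        refine setLIntegral_mono' (measurableSet_lt measurable_const (h𝒳 X hX)) fun ω hω => ?_
        have hXω : (m : ℝ) < X ω := hω
        rw [← ENNReal.ofReal_ofNat, ← ENNReal.ofReal_mul zero_le_two]
        exact ENNReal.ofReal_le_ofReal (by linarith)
    _ ≤ ∫⁻ ω, 2 * ENNReal.ofReal (X ω - n) ∂μ := setLIntegral_le_lintegral _ _
    _ = 2 * ∫⁻ ω, ENNReal.ofReal (X ω - n) ∂μ :=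
        lintegral_const_mul _ ((h𝒳 X hX).sub_const _).ennreal_ofReal
    _ ≤ 2 * (ε / 2) := by gcongr; exact hn X hX
    _ = ε := ENNReal.mul_div_cancel two_ne_zero ENNReal.ofNat_ne_top

theorem UnifInt.iSup_lintegral_ne_top {μ : Measure Ω} [IsFiniteMeasure μ] (h : UnifInt μ 𝒳) :
    ⨆ X ∈ 𝒳, ∫⁻ ω, ENNReal.ofReal (X ω) ∂μ ≠ ⊤ := by
  obtain ⟨n, hn⟩ := (ENNReal.tendsto_atTop_zero.1 h 1 one_pos)
  refine ne_top_of_le_ne_top (b := n * μ Set.univ + 1) (by finiteness) (iSup₂_le fun X hX => ?_)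
  calc ∫⁻ ω, ENNReal.ofReal (X ω) ∂μ
      ≤ ∫⁻ ω, (n + {ω | (n : ℝ) < X ω}.indicator (fun ω => ENNReal.ofReal (X ω)) ω) ∂μ := by
        refine lintegral_mono fun ω => ?_
        rcases lt_or_ge (n : ℝ) (X ω) with hω | hω
        · rw [Set.indicator_of_mem (show ω ∈ {ω | (n : ℝ) < X ω} from hω)]
          exact le_add_self
        · exact (ENNReal.ofReal_le_natCast.2 hω).trans le_self_add
    _ = n * μ Set.univ +
          ∫⁻ ω, {ω | (n : ℝ) < X ω}.indicator (fun ω => ENNReal.ofReal (X ω)) ω ∂μ := by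
        rw [lintegral_add_left measurable_const, lintegral_const]
    _ ≤ n * μ Set.univ + 1 := by
        gcongr
        exact (lintegral_indicator_le _ _).trans ((le_iSup₂ X hX).trans (hn n le_rfl))

theorem UnifInt.smul_measure {μ : Measure Ω} (h : UnifInt μ 𝒳) {c : ENNReal} (hc : c ≠ ⊤) :
    UnifInt (c • μ) 𝒳 := by
  simpa only [UnifInt, Measure.restrict_smul, lintegral_smul_measure, smul_eq_mul,
    ENNReal.mul_iSup, mul_zero] using ENNReal.Tendsto.const_mul h (Or.inr hc)

theorem tendsto_tsum_of_dominated {ι : Type*} [Countable ι] {F : ℕ → ι → ENNReal}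
    {f bound : ι → ENNReal} (hF : ∀ n i, F n i ≤ bound i) (hbound : ∑' i, bound i ≠ ⊤)
    (hlim : ∀ i, Tendsto (fun n => F n i) atTop (𝓝 (f i))) :
    Tendsto (fun n => ∑' i, F n i) atTop (𝓝 (∑' i, f i)) := by
  let : MeasurableSpace ι := ⊤
  simpa only [lintegral_count] using tendsto_lintegral_of_dominated_convergence
    (μ := Measure.count) bound (fun _ => measurable_from_top) (fun n => ae_of_all _ (hF n))
    (by rwa [lintegral_count]) (ae_of_all _ hlim)

theorem UnifInt.sum_measure {ι : Type*} [Countable ι] {μ : ι → Measure Ω}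
    (h : ∀ i, UnifInt (μ i) 𝒳)
    (hsum : ∑' i, ⨆ X ∈ 𝒳, ∫⁻ ω, ENNReal.ofReal (X ω) ∂μ i ≠ ⊤) :
    UnifInt (Measure.sum μ) 𝒳 := by
  have htail := tendsto_tsum_of_dominated
    (F := fun (n : ℕ) i => ⨆ X ∈ 𝒳, ∫⁻ ω in {ω | (n : ℝ) < X ω}, ENNReal.ofReal (X ω) ∂μ i)
    (fun _ _ => iSup₂_mono fun _ _ => setLIntegral_le_lintegral _ _) hsum h
  rw [tsum_zero] at htail
  refine tendsto_of_tendsto_of_tendsto_of_le_of_le tendsto_const_nhds htail (fun _ => zero_le)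
    fun n => iSup₂_le fun X hX => ?_
  rw [Measure.restrict_sum_of_countable, lintegral_sum_measure]
  exact ENNReal.tsum_le_tsum fun i => le_iSup₂ (f := fun (X : Ω → ℝ) (_ : X ∈ 𝒳) =>
    ∫⁻ ω in {ω | (n : ℝ) < X ω}, ENNReal.ofReal (X ω) ∂μ i) X hX

theorem exists_isProbabilityMeasure_unifInt_of_sum {ι : Type*} [Countable ι]
    {μ : ι → Measure Ω} [∀ i, IsFiniteMeasure (μ i)] (hμ : Measure.sum μ ≠ 0)
    (h : ∀ i, UnifInt (μ i) 𝒳) :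
    ∃ Q : Measure Ω, IsProbabilityMeasure Q ∧ Q ≪ Measure.sum μ ∧ Measure.sum μ ≪ Q ∧
      UnifInt Q 𝒳 := by
  obtain ⟨w, hw_pos, hw⟩ := ENNReal.exists_pos_tsum_mul_lt_of_countable one_ne_zero
    (fun i => μ i Set.univ + ⨆ X ∈ 𝒳, ∫⁻ ω, ENNReal.ofReal (X ω) ∂μ i)
    fun i => ENNReal.add_ne_top.2 ⟨measure_ne_top _ _, (h i).iSup_lintegral_ne_top⟩
  simp only [add_mul, ENNReal.tsum_add] at hw
  obtain ⟨hw_mass, hw_sup⟩ := ENNReal.add_ne_top.1 hw.ne_top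
  set ν : Measure Ω := Measure.sum fun i => (w i : ENNReal) • μ i
  have hν_ac : ν ≪ Measure.sum μ := Measure.absolutelyContinuous_sum_left fun i =>
    Measure.absolutelyContinuous_sum_right i Measure.smul_absolutelyContinuous
  have hν_ac' : Measure.sum μ ≪ ν := Measure.absolutelyContinuous_sum_left fun i =>
    Measure.absolutelyContinuous_sum_right i
      (Measure.absolutelyContinuous_smul (ENNReal.coe_ne_zero.2 (hw_pos i).ne'))
  have hν_finite : IsFiniteMeasure ν := by
    refine ⟨?_⟩
    simpa only [ν, Measure.sum_apply _ .univ, Measure.smul_apply, smul_eq_mul, mul_comm]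
      using hw_mass.lt_top
  have hν_ne : NeZero ν := ⟨fun h0 => hμ (Measure.absolutelyContinuous_zero_iff.1 (h0 ▸ hν_ac'))⟩
  have hν_unif : UnifInt ν 𝒳 := by
    refine UnifInt.sum_measure (fun i => (h i).smul_measure ENNReal.coe_ne_top) ?_
    simpa only [lintegral_smul_measure, smul_eq_mul, ← ENNReal.mul_iSup, mul_comm] using hw_sup
  have hmass : (ν Set.univ)⁻¹ ≠ ⊤ := ENNReal.inv_ne_top.2 (NeZero.ne _)
  exact ⟨(ν Set.univ)⁻¹ • ν, inferInstance, Measure.smul_absolutelyContinuous.trans hν_ac,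
    hν_ac'.trans (Measure.absolutelyContinuous_smul (ENNReal.inv_ne_zero.2 (measure_ne_top _ _))),
    hν_unif.smul_measure hmass⟩

end UniformIntegrability

section Exhaustion

variable {Ω : Type*} [MeasurableSpace Ω] {P : Measure Ω} {𝒳 : Set (Ω → ℝ)}

theorem exists_setLIntegral_sub_le [IsFiniteMeasure P] (h𝒳 : ∀ X ∈ 𝒳, Measurable X)
    (hcap : ∀ Y : Ω → ℝ, (∀ n : ℕ, Y ∈ Oset P 𝒳 n) → ∀ᵐ ω ∂P, Y ω = 0) {ε : ℝ} (hε : 0 < ε) :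
    ∃ (n : ℕ) (B : Set Ω), P Bᶜ ≤ ENNReal.ofReal ε ∧
      ∀ X ∈ 𝒳, ∫⁻ ω in B, ENNReal.ofReal (X ω - n) ∂P ≤ ENNReal.ofReal ε := by
  obtain ⟨n, B, -, hPB, hBO⟩ := exists_measurableSet_setLIntegral_le_of_antitone antitone_Oset
    (fun _ => convex_scSet _) (fun _ _ hf => hf.1)
    (fun _ hf => ae_frequently_lt_of_mem_Oset hcap hf) hε
  refine ⟨n, B, hPB, fun X hX => ?_⟩
  exact (lintegral_mono fun ω => ENNReal.ofReal_le_ofReal (le_max_left _ 0)).trans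
    (hBO _ (posPart_sub_mem_Oset hX (h𝒳 X hX) n))

theorem exists_iUnion_conull_unifInt_restrict [IsFiniteMeasure P] (h𝒳 : ∀ X ∈ 𝒳, Measurable X)
    (hcap : ∀ Y : Ω → ℝ, (∀ n : ℕ, Y ∈ Oset P 𝒳 n) → ∀ᵐ ω ∂P, Y ω = 0) :
    ∃ A : ℕ → Set Ω, (∀ᵐ ω ∂P, ω ∈ ⋃ j, A j) ∧ ∀ j, UnifInt (P.restrict (A j)) 𝒳 := by
  choose n B hPB hBX using fun k : ℕ =>
    exists_setLIntegral_sub_le h𝒳 hcap (pow_pos (one_half_pos (α := ℝ)) k)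
  refine ⟨fun j => ⋂ k ≥ j, B k, ?_, fun j => ?_⟩
  · have hsum : ∑' k, P (B k)ᶜ ≠ ⊤ :=
      ne_top_of_le_ne_top summable_geometric_two.tsum_ofReal_ne_top (ENNReal.tsum_le_tsum hPB)
    filter_upwards [ae_eventually_notMem hsum] with ω hω
    obtain ⟨j, hj⟩ := eventually_atTop.1 hω
    exact Set.mem_iUnion.2 ⟨j, Set.mem_iInter₂.2 fun k hk => Set.notMem_compl_iff.1 (hj k hk)⟩
  · refine unifInt_of_forall_exists_lintegral_sub_le h𝒳 fun ε hε => ?_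
    have hpow : Tendsto (fun k : ℕ => ENNReal.ofReal ((1 / 2) ^ k)) atTop (𝓝 0) := by
      simpa using ENNReal.tendsto_ofReal
        (tendsto_pow_atTop_nhds_zero_of_lt_one (r := (1 / 2 : ℝ)) (by norm_num) (by norm_num))
    obtain ⟨k, hkε, hjk⟩ := ((hpow.eventually_le_const hε).and (eventually_ge_atTop j)).exists
    exact ⟨n k, fun X hX => (lintegral_mono_set (Set.iInter₂_subset k hjk)).trans
      ((hBX k X hX).trans hkε)⟩

theorem absolutelyContinuous_sum_restrict {ι : Type*} [Countable ι] {A : ι → Set Ω}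
    (hA : ∀ᵐ ω ∂P, ω ∈ ⋃ i, A i) : P ≪ Measure.sum fun i => P.restrict (A i) := by
  conv_lhs => rw [← Measure.restrict_eq_self_of_ae_mem hA]
  exact Measure.restrict_iUnion_le.absolutelyContinuous

theorem exists_isProbabilityMeasure_unifInt [IsFiniteMeasure P] [NeZero P]
    (h𝒳 : ∀ X ∈ 𝒳, Measurable X)
    (hcap : ∀ Y : Ω → ℝ, (∀ n : ℕ, Y ∈ Oset P 𝒳 n) → ∀ᵐ ω ∂P, Y ω = 0) :
    ∃ Q : Measure Ω, IsProbabilityMeasure Q ∧ Q ≪ P ∧ P ≪ Q ∧ UnifInt Q 𝒳 := by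
  obtain ⟨A, hA, hA_unif⟩ := exists_iUnion_conull_unifInt_restrict h𝒳 hcap
  have hP_ac : P ≪ Measure.sum fun j => P.restrict (A j) := absolutelyContinuous_sum_restrict hA
  have hsum_ac : (Measure.sum fun j => P.restrict (A j)) ≪ P :=
    Measure.absolutelyContinuous_sum_left fun _ => Measure.absolutelyContinuous_restrict
  have hsum_ne : (Measure.sum fun j => P.restrict (A j)) ≠ 0 := fun h0 =>
    NeZero.ne P (Measure.absolutelyContinuous_zero_iff.1 (h0 ▸ hP_ac))
  obtain ⟨Q, hQ, hQ_ac, hac_Q, hQ_unif⟩ :=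
    exists_isProbabilityMeasure_unifInt_of_sum hsum_ne hA_unif
  exact ⟨Q, hQ, hQ_ac.trans hsum_ac, hP_ac.trans hac_Q, hQ_unif⟩

theorem Oset_congr_ae {μ ν : Measure Ω} (h : ae μ = ae ν) (n : ℕ) :
    Oset μ 𝒳 n = Oset ν 𝒳 n := by
  simp only [Oset, scSet, L0pos, h]

end Exhaustion

theorem stmt_4_general {Ω : Type*} [MeasurableSpace Ω] (P : Measure Ω) [SFinite P] [NeZero P]
    (𝒳 : Set (Ω → ℝ)) (h𝒳 : ∀ X ∈ 𝒳, Measurable X)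
    (hcap : ∀ Y : Ω → ℝ, (∀ n : ℕ, Y ∈ Oset P 𝒳 n) → ∀ᵐ ω ∂P, Y ω = 0) :
    ∃ Q : Measure Ω, IsProbabilityMeasure Q ∧ Q ≪ P ∧ P ≪ Q ∧ UnifInt Q 𝒳 := by
  have hcap' (Y : Ω → ℝ) (hY : ∀ n : ℕ, Y ∈ Oset P.toFinite 𝒳 n) : ∀ᵐ ω ∂P.toFinite, Y ω = 0 := by
    rw [ae_toFinite]
    exact hcap Y fun n => Oset_congr_ae (ae_toFinite (μ := P)) n ▸ hY n
  obtain ⟨Q, hQ, hQ_ac, hac_Q, hQ_unif⟩ := exists_isProbabilityMeasure_unifInt h𝒳 hcap'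
  exact ⟨Q, hQ, hQ_ac.trans (toFinite_absolutelyContinuous P),
    (absolutelyContinuous_toFinite P).trans hac_Q, hQ_unif⟩

/-- If `⋂ₙ Oₙ^𝒳 = {0}`, there is `Q ~ P` such that `𝒳` is uniformly `Q`-integrable. -/
theorem stmt_4 {Ω : Type*} [MeasurableSpace Ω] (P : Measure Ω) [IsProbabilityMeasure P]
    (𝒳 : Set (Ω → ℝ)) (h𝒳 : 𝒳 ⊆ L0pos P)
    (hcap : ∀ Y : Ω → ℝ, (∀ n : ℕ, Y ∈ Oset P 𝒳 n) → ∀ᵐ ω ∂P, Y ω = 0) :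
    ∃ Q : Measure Ω, IsProbabilityMeasure Q ∧ Q ≪ P ∧ P ≪ Q ∧ UnifInt Q 𝒳 :=
  stmt_4_general P 𝒳 (fun _ hX => (h𝒳 hX).1) hcap
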